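/- Let G be an infinite finitely generated right-angled Coxeter group. Then G is slender if and only if there exist natural numbers n and k such that G ≅ (ℤ/2)ⁿ × (ℤ/2 ∗ ℤ/2)ᵏ, where ℤ/2 ∗ ℤ/2 denotes the free product of two copies of the cyclic group of order 2 (the infinite dihedral group). -/

import Mathlib

def Group.Slender (G : Type*) [Group G] : Prop := ∀ H : Subgroup G, H.FG

def Group.FinitelyPresented (G : Type*) [Group G] : Prop :=
  ∃ (n : ℕ) (rels : Set (FreeGroup (Fin n))), rels.Finite ∧ Nonempty (PresentedGroup rels ≃* G)

def Group.Coherent (G : Type*) [Group G] : Prop :=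
  ∀ H : Subgroup G, H.FG → Group.FinitelyPresented H

/-- The Coxeter matrix of the right-angled Coxeter group of a simplicial graph `Γ`:
the label of every edge is `2`, and non-adjacent distinct vertices get the label `0`
(that is, `∞`: no relation). -/
def SimpleGraph.coxeterMatrix {V : Type*} (Γ : SimpleGraph V) [DecidableEq V]
    [DecidableRel Γ.Adj] : CoxeterMatrix V where
  M v w := if v = w then 1 else if Γ.Adj v w then 2 else 0
  isSymm := Matrix.IsSymm.ext fun a b => by
    rcases eq_or_ne a b with h | h
    · simp [h]
    · simp [h, h.symm, Γ.adj_comm]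
  diagonal v := by simp
  off_diagonal v w h := by simp only [if_neg h]; split <;> omega

/-- The right-angled Coxeter group
`C(Γ) = ⟨V ∣ v² = 1 for all v ∈ V, (vw)² = 1 for all {v,w} ∈ E⟩` of a simplicial graph `Γ`. -/
def SimpleGraph.racg {V : Type*} (Γ : SimpleGraph V) [DecidableEq V]
    [DecidableRel Γ.Adj] : Type _ :=
  Γ.coxeterMatrix.Group

instance {V : Type*} (Γ : SimpleGraph V) [DecidableEq V] [DecidableRel Γ.Adj] :
    Group Γ.racg :=
  inferInstanceAs (Group Γ.coxeterMatrix.Group)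

open Monoid (Coprod)

namespace RacgSlender

/-! ### Closure properties of slender groups -/

theorem slender_ext {G Q : Type*} [Group G] [Group Q] (f : G →* Q)
    (hk : ∀ H : Subgroup G, H ≤ f.ker → H.FG) (hQ : Group.Slender Q) : Group.Slender G := by
  intro H
  obtain ⟨S, hS⟩ := hQ (H.map f)
  have hmem : ∀ s ∈ S, ∃ t ∈ H, f t = s := by
    intro s hs
    have : s ∈ H.map f := by rw [← hS]; exact Subgroup.subset_closure hs
    simpa using this
  choose! t ht hft using hmem
  have hK : (Subgroup.closure (t '' (S : Set Q)) ⊔ (H ⊓ f.ker)).FG := by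
    refine Subgroup.FG.sup ?_ (hk _ inf_le_right)
    rw [Subgroup.fg_iff]
    exact ⟨_, rfl, S.finite_toSet.image _⟩
  have hcl : Subgroup.closure (t '' (S : Set Q)) ≤ H := by
    rw [Subgroup.closure_le]
    rintro _ ⟨s, hs, rfl⟩
    exact ht s hs
  have hEq : Subgroup.closure (t '' (S : Set Q)) ⊔ (H ⊓ f.ker) = H := by
    apply le_antisymm
    · exact sup_le hcl inf_le_left
    · intro h hh
      have h1 : f h ∈ (Subgroup.closure (t '' (S : Set Q))).map f := by
        rw [MonoidHom.map_closure]
        have : f '' (t '' (S : Set Q)) = S := by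
          rw [Set.image_image]
          ext x
          constructor
          · rintro ⟨s, hs, rfl⟩
            change f (t s) ∈ (S : Set Q)
            rw [hft s hs]; exact hs
          · intro hx
            exact ⟨x, hx, hft x hx⟩
        rw [this, hS]
        exact Subgroup.mem_map_of_mem f hh
      obtain ⟨u, hu, huf⟩ := h1
      have : h = u * (u⁻¹ * h) := by group
      rw [this]
      refine Subgroup.mul_mem_sup hu ⟨H.mul_mem (H.inv_mem (hcl hu)) hh, ?_⟩
      change f (u⁻¹ * h) = 1
      rw [map_mul, map_inv, huf]
      simp
  rwa [hEq] at hK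

theorem slender_of_injective {G Q : Type*} [Group G] [Group Q] (f : G →* Q)
    (hf : Function.Injective f) (hQ : Group.Slender Q) : Group.Slender G := by
  refine slender_ext f ?_ hQ
  intro H hH
  rw [(MonoidHom.ker_eq_bot_iff f).2 hf, le_bot_iff] at hH
  rw [hH]
  exact Subgroup.FG.bot

theorem slender_prod {G Q : Type*} [Group G] [Group Q]
    (hG : Group.Slender G) (hQ : Group.Slender Q) : Group.Slender (G × Q) := by
  refine slender_ext (MonoidHom.fst G Q) ?_ hG
  intro H hH
  have : H = (H.comap (MonoidHom.inr G Q)).map (MonoidHom.inr G Q) := by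
    ext ⟨a, b⟩
    constructor
    · intro h
      have h1 : a = 1 := hH h
      subst h1
      exact ⟨b, h, rfl⟩
    · rintro ⟨c, hc, h⟩
      rw [← h]
      exact hc
  rw [this]
  obtain ⟨S, hS, hf⟩ := (Subgroup.fg_iff _).1 (hQ (H.comap (MonoidHom.inr G Q)))
  rw [Subgroup.fg_iff, ← hS, MonoidHom.map_closure]
  exact ⟨_, rfl, hf.image _⟩

theorem slender_finite (G : Type*) [Group G] [Finite G] : Group.Slender G := by
  intro H
  rw [Subgroup.fg_iff]
  exact ⟨H, Subgroup.closure_eq H, Set.toFinite _⟩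

theorem slender_pi {X : Type*} [Group X] (hX : Group.Slender X) (k : ℕ) :
    Group.Slender (Fin k → X) := by
  induction k with
  | zero => exact slender_finite _
  | succ k ih =>
    let f : (Fin (k+1) → X) →* X × (Fin k → X) :=
      { toFun := fun g => (g 0, fun i => g i.succ)
        map_one' := rfl
        map_mul' := fun _ _ => rfl }
    refine slender_of_injective f ?_ (slender_prod hX ih)
    intro g h hgh
    have h1 : g 0 = h 0 := congrArg Prod.fst hgh
    have h2 : (fun i : Fin k => g i.succ) = fun i => h i.succ := congrArg Prod.snd hgh
    funext i
    refine Fin.cases h1 (fun j => congrFun h2 j) i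

/-! ### The group of order two and the infinite dihedral group -/

abbrev Z2 := Multiplicative (ZMod 2)

abbrev DI := Coprod Z2 Z2

def gen : Z2 := Multiplicative.ofAdd 1

theorem z2_cases : ∀ x : Z2, x = 1 ∨ x = gen := by decide

theorem gen_mul : gen * gen = 1 := by decide

theorem gen_ne : gen ≠ 1 := by decide

def zh {G : Type*} [Group G] (g : G) (h : g * g = 1) : Z2 →* G where
  toFun x := if x = 1 then 1 else g
  map_one' := by simp
  map_mul' x y := by
    rcases z2_cases x with rfl | rfl <;> rcases z2_cases y with rfl | rfl <;>
      simp [gen_mul, gen_ne, h]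

theorem zh_gen {G : Type*} [Group G] (g : G) (h : g * g = 1) : zh g h gen = g := by
  simp [zh, gen_ne]

theorem z2_hom_ext {G : Type*} [Group G] {f g : Z2 →* G} (h : f gen = g gen) : f = g := by
  refine MonoidHom.ext fun x => ?_
  rcases z2_cases x with rfl | rfl
  · simp
  · exact h

def da : DI := Coprod.inl gen
def db : DI := Coprod.inr gen

theorem da_mul : da * da = 1 := by
  rw [da, ← map_mul, gen_mul, map_one]

theorem db_mul : db * db = 1 := by
  rw [db, ← map_mul, gen_mul, map_one]

theorem di_form (x : DI) : ∃ n : ℤ, x = (da * db) ^ n ∨ x = (da * db) ^ n * da := by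
  have hai : da⁻¹ = da := inv_eq_of_mul_eq_one_left da_mul
  have hbi : db⁻¹ = db := inv_eq_of_mul_eq_one_left db_mul
  have hconj : ∀ n : ℤ, da * (da * db) ^ n = (da * db) ^ (-n) * da := by
    intro n
    have h1 : da * (da * db) * da⁻¹ = (da * db)⁻¹ := by
      rw [mul_inv_rev, hai, hbi, ← mul_assoc, da_mul, one_mul]
    have h2 := conj_zpow (i := n) (a := da) (b := da * db)
    rw [h1, inv_zpow'] at h2
    rw [h2]; group
  have hb : db = (da * db) ^ (-1 : ℤ) * da := by
    rw [zpow_neg_one, mul_inv_rev, hai, hbi, mul_assoc, da_mul, mul_one]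
  have ha : ∀ x : DI, (∃ n : ℤ, x = (da * db) ^ n ∨ x = (da * db) ^ n * da) →
      ∃ n : ℤ, da * x = (da * db) ^ n ∨ da * x = (da * db) ^ n * da := by
    rintro x ⟨n, rfl | rfl⟩
    · exact ⟨-n, Or.inr (hconj n)⟩
    · refine ⟨-n, Or.inl ?_⟩
      rw [← mul_assoc, hconj, mul_assoc, da_mul, mul_one]
  have hz : ∀ (m : ℤ) (x : DI), (∃ n : ℤ, x = (da * db) ^ n ∨ x = (da * db) ^ n * da) →
      ∃ n : ℤ, (da * db) ^ m * x = (da * db) ^ n ∨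
        (da * db) ^ m * x = (da * db) ^ n * da := by
    rintro m x ⟨n, rfl | rfl⟩
    · exact ⟨m + n, Or.inl (zpow_add _ _ _).symm⟩
    · exact ⟨m + n, Or.inr (by rw [zpow_add, mul_assoc])⟩
  induction x using Coprod.induction_on' with
  | one => exact ⟨0, Or.inl (by simp)⟩
  | inl_mul m x ih =>
    rcases z2_cases m with rfl | rfl
    · simpa using ih
    · exact ha x ih
  | inr_mul m x ih =>
    rcases z2_cases m with rfl | rfl
    · simpa using ih
    · have := hz (-1) _ (ha x ih)
      rw [← mul_assoc, ← hb] at this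
      exact this

theorem slender_di : Group.Slender DI := by
  refine slender_ext (Coprod.lift (MonoidHom.id Z2) (MonoidHom.id Z2)) ?_ (slender_finite _)
  intro H hH
  have hle : H ≤ Subgroup.zpowers (da * db) := by
    intro x hx
    have hx' := hH hx
    rw [MonoidHom.mem_ker] at hx'
    obtain ⟨n, rfl | rfl⟩ := di_form x
    · exact ⟨n, rfl⟩
    · exfalso
      rw [map_mul, map_zpow, map_mul] at hx'
      simp only [da, db, Coprod.lift_apply_inl, Coprod.lift_apply_inr, MonoidHom.id_apply,
        gen_mul, one_zpow, one_mul] at hx'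
      exact gen_ne hx'
  have := Subgroup.isCyclic_of_le hle
  obtain ⟨g, hg⟩ := (Subgroup.isCyclic_iff_exists_zpowers_eq_top H).1 this
  rw [Subgroup.fg_iff, ← hg]
  exact ⟨{g}, (Subgroup.zpowers_eq_closure g).symm, Set.finite_singleton g⟩

/-! ### Right-angled Coxeter groups -/

section Racg

variable {V : Type} [DecidableEq V] (Γ : SimpleGraph V) [DecidableRel Γ.Adj]

def of (v : V) : Γ.racg := Γ.coxeterMatrix.simple v

theorem of_mul (v : V) : of Γ v * of Γ v = 1 :=
  Γ.coxeterMatrix.toCoxeterSystem.simple_mul_simple_self v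

theorem of_comm {v w : V} (h : Γ.Adj v w) : Commute (of Γ v) (of Γ w) := by
  have h1 : (of Γ v * of Γ w) ^ (Γ.coxeterMatrix v w) = 1 :=
    Γ.coxeterMatrix.toCoxeterSystem.simple_mul_simple_pow v w
  have h2 : Γ.coxeterMatrix v w = 2 := by
    change (if v = w then 1 else if Γ.Adj v w then 2 else 0) = 2
    rw [if_neg h.ne, if_pos h]
  rw [h2, pow_two] at h1
  have h3 := eq_inv_of_mul_eq_one_left h1
  rw [mul_inv_rev, inv_eq_of_mul_eq_one_left (of_mul Γ v),
    inv_eq_of_mul_eq_one_left (of_mul Γ w)] at h3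
  exact h3

theorem exists_lift {H : Type*} [Group H] (f : V → H) (h1 : ∀ v, f v * f v = 1)
    (h2 : ∀ v w, Γ.Adj v w → Commute (f v) (f w)) :
    ∃ F : Γ.racg →* H, ∀ v, F (of Γ v) = f v := by
  have hl : Γ.coxeterMatrix.IsLiftable f := by
    intro v w
    change (f v * f w) ^ (if v = w then 1 else if Γ.Adj v w then 2 else 0) = 1
    split_ifs with h h'
    · subst h; rw [pow_one, h1]
    · rw [(h2 v w h').mul_pow, pow_two, pow_two, h1, h1, one_mul]
    · rw [pow_zero]
  exact ⟨Γ.coxeterMatrix.toCoxeterSystem.lift ⟨f, hl⟩,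
    fun v => Γ.coxeterMatrix.toCoxeterSystem.lift_apply_simple hl v⟩

theorem racg_hom_ext {H : Type*} [Group H] {f g : Γ.racg →* H}
    (h : ∀ v, f (of Γ v) = g (of Γ v)) : f = g :=
  Γ.coxeterMatrix.toCoxeterSystem.ext_simple h

end Racg

/-! ### A non-slender quotient -/

abbrev P := Equiv.Perm (ℤ × Bool)

def invPerm (f : ℤ × Bool → ℤ × Bool) (h : Function.Involutive f) : P := h.toPerm f

def pa : P := Function.Involutive.toPerm (fun p : ℤ × Bool => (1 - p.1, p.2)) (by
  rintro ⟨x, e⟩; simp)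
def pb : P := Function.Involutive.toPerm (fun p : ℤ × Bool => (- p.1, p.2)) (by
  rintro ⟨x, e⟩; simp)
def pc (n : ℤ) : P :=
  Function.Involutive.toPerm (fun p : ℤ × Bool => (p.1, if p.1 = n then !p.2 else p.2)) (by
  rintro ⟨x, e⟩; by_cases h : x = n <;> simp [h])

@[simp] theorem pa_apply (p : ℤ × Bool) : pa p = (1 - p.1, p.2) := rfl
@[simp] theorem pb_apply (p : ℤ × Bool) : pb p = (-p.1, p.2) := rfl
@[simp] theorem pc_apply (n : ℤ) (p : ℤ × Bool) :
    pc n p = (p.1, if p.1 = n then !p.2 else p.2) := rfl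

theorem pa_mul : pa * pa = 1 := by
  ext p <;> simp
theorem pb_mul : pb * pb = 1 := by
  ext p <;> simp
theorem pc_mul (n : ℤ) : pc n * pc n = 1 := by
  ext p
  · simp
  · by_cases h : p.1 = n <;> simp [h]

theorem pb_pc : Commute pb (pc 0) := by
  ext p <;> simp

theorem pc_succ (n : ℕ) : (pa * pb) * pc n * (pb * pa) = pc (n + 1 : ℕ) := by
  ext p
  · simp
  · have : (p.1 - 1 = (n : ℤ)) ↔ p.1 = n + 1 := by omega
    simp [this]

/-- finitely supported permutations in a subgroup -/
def finSupp (R : Subgroup P) : Subgroup P where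
  carrier := {g | g ∈ R ∧ {p | g p ≠ p}.Finite}
  one_mem' := ⟨R.one_mem, by simp⟩
  mul_mem' := by
    rintro g h ⟨hg, hg'⟩ ⟨hh, hh'⟩
    refine ⟨R.mul_mem hg hh, (hg'.union hh').subset ?_⟩
    intro p hp
    by_contra hcon
    simp only [Set.mem_union, Set.mem_ofPred_eq, not_or, not_not] at hcon
    apply hp
    rw [Equiv.Perm.mul_apply, hcon.2, hcon.1]
  inv_mem' := by
    rintro g ⟨hg, hg'⟩
    refine ⟨R.inv_mem hg, hg'.subset ?_⟩
    intro p hp hcon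
    apply hp
    rw [Equiv.Perm.inv_eq_iff_eq]
    exact hcon.symm

theorem not_fg (R : Subgroup P) (ha : pa ∈ R) (hb : pb ∈ R) (hc : pc 0 ∈ R) :
    ¬ (finSupp R).FG := by
  have hcn : ∀ n : ℕ, pc n ∈ finSupp R := by
    intro n
    constructor
    · induction n with
      | zero => exact hc
      | succ n ih =>
        rw [← pc_succ]
        exact R.mul_mem (R.mul_mem (R.mul_mem ha hb) ih) (R.mul_mem hb ha)
    · refine (Set.toFinite ({((n : ℤ), true), ((n : ℤ), false)} : Set (ℤ × Bool))).subset ?_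
      rintro ⟨x, e⟩ hp
      by_cases h : x = n
      · subst h; cases e <;> simp
      · simp [h] at hp
  intro hfg
  obtain ⟨S, hS, hfin⟩ := (Subgroup.fg_iff _).1 hfg
  have hU : (⋃ g ∈ S, {p | g p ≠ p}).Finite := by
    refine hfin.biUnion ?_
    intro g hg
    have : g ∈ finSupp R := by rw [← hS]; exact Subgroup.subset_closure hg
    exact this.2
  have hinj : Function.Injective (fun n : ℕ => ((n : ℤ), true)) := by
    intro a b h
    simpa using h
  obtain ⟨n, hn⟩ : ∃ n : ℕ, ((n : ℤ), true) ∉ (⋃ g ∈ S, {p : ℤ × Bool | g p ≠ p}) := by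
    by_contra! hcon
    exact Set.infinite_of_injective_forall_mem hinj hcon hU
  have hle : Subgroup.closure S ≤ MulAction.stabilizer P ((n : ℤ), true) := by
    rw [Subgroup.closure_le]
    intro g hg
    rw [SetLike.mem_coe, MulAction.mem_stabilizer_iff]
    by_contra hne
    exact hn (Set.mem_biUnion hg hne)
  rw [hS] at hle
  have := hle (hcn n)
  rw [MulAction.mem_stabilizer_iff, Equiv.Perm.smul_def] at this
  simp at this

theorem slender_range {G Q : Type*} [Group G] [Group Q] (f : G →* Q)
    (hG : Group.Slender G) (H : Subgroup Q) (hH : H ≤ f.range) : H.FG := by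
  obtain ⟨S, hS, hf⟩ := (Subgroup.fg_iff _).1 (hG (H.comap f))
  rw [← Subgroup.map_comap_eq_self hH, Subgroup.fg_iff, ← hS, MonoidHom.map_closure]
  exact ⟨_, rfl, hf.image _⟩

theorem deg_le_one {V : Type} [DecidableEq V] (Γ : SimpleGraph V) [DecidableRel Γ.Adj]
    (hs : Group.Slender Γ.racg) (v u w : V) (hu : u ≠ v) (hw : w ≠ v)
    (hvu : ¬ Γ.Adj v u) (hvw : ¬ Γ.Adj v w) : u = w := by
  by_contra huw
  let f : V → P := fun x => if x = v then pa else if x = u then pb else if x = w then pc 0 else 1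
  have hfv : f v = pa := by simp [f]
  have hfu : f u = pb := by simp [f, hu]
  have hfw : f w = pc 0 := by simp [f, hw, Ne.symm huw]
  have hfo : ∀ x, x ≠ v → x ≠ u → x ≠ w → f x = 1 := by
    intro x h1 h2 h3; simp [f, h1, h2, h3]
  have hcases : ∀ x, x = v ∨ x = u ∨ x = w ∨ f x = 1 := by
    intro x
    by_cases h1 : x = v
    · exact Or.inl h1
    by_cases h2 : x = u
    · exact Or.inr (Or.inl h2)
    by_cases h3 : x = w
    · exact Or.inr (Or.inr (Or.inl h3))
    exact Or.inr (Or.inr (Or.inr (hfo x h1 h2 h3)))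
  obtain ⟨F, hF⟩ := exists_lift Γ f
    (by
      intro x
      rcases hcases x with rfl | rfl | rfl | h
      · rw [hfv, pa_mul]
      · rw [hfu, pb_mul]
      · rw [hfw, pc_mul]
      · rw [h, one_mul])
    (by
      intro x y hxy
      rcases hcases x with rfl | rfl | rfl | h
      · rcases hcases y with rfl | rfl | rfl | h
        · exact Commute.refl _
        · exact absurd hxy hvu
        · exact absurd hxy hvw
        · rw [h]; exact Commute.one_right _
      · rcases hcases y with rfl | rfl | rfl | h
        · exact absurd hxy.symm hvu
        · exact Commute.refl _
        · rw [hfu, hfw]; exact pb_pc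
        · rw [h]; exact Commute.one_right _
      · rcases hcases y with rfl | rfl | rfl | h
        · exact absurd hxy.symm hvw
        · rw [hfu, hfw]; exact pb_pc.symm
        · exact Commute.refl _
        · rw [h]; exact Commute.one_right _
      · rw [h]; exact Commute.one_left _)
  refine not_fg F.range ⟨of Γ v, by rw [hF, hfv]⟩ ⟨of Γ u, by rw [hF, hfu]⟩
    ⟨of Γ w, by rw [hF, hfw]⟩ (slender_range F hs _ fun g hg => hg.1)

/-! ### The decomposition -/

theorem commute_lift {G : Type*} [Group G] {f g : Z2 →* G} {y : G}
    (hf : Commute (f gen) y) (hg : Commute (g gen) y) (x : DI) :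
    Commute (Coprod.lift f g x) y := by
  induction x using Coprod.induction_on with
  | inl m =>
    rcases z2_cases m with rfl | rfl
    · simp
    · simpa using hf
  | inr m =>
    rcases z2_cases m with rfl | rfl
    · simp
    · simpa using hg
  | mul x y hx hy => rw [map_mul]; exact hx.mul_left hy

theorem commute_zh {G : Type*} [Group G] {f : Z2 →* G} {y : G}
    (hf : Commute (f gen) y) (x : Z2) : Commute (f x) y := by
  rcases z2_cases x with rfl | rfl
  · simp
  · exact hf

theorem decomp {V : Type} [Fintype V] [DecidableEq V] (Γ : SimpleGraph V) [DecidableRel Γ.Adj]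
    (σ : V → V) (hσ : ∀ v, σ (σ v) = v) (hadj : ∀ v w, w ≠ v → w ≠ σ v → Γ.Adj v w)
    (hnadj : ∀ v, ¬ Γ.Adj v (σ v)) :
    ∃ n k : ℕ, Nonempty (Γ.racg ≃* (Fin n → Z2) × (Fin k → DI)) := by
  classical
  let e := Fintype.equivFin V
  let A := {v : V // σ v = v}
  let B := {v : V // e v < e (σ v)}
  have hB : ∀ b : B, σ b.1 ≠ b.1 := by
    rintro ⟨b, hb⟩ h
    simp only at h
    rw [h] at hb
    exact lt_irrefl _ hb
  have hBB : ∀ b c : B, b ≠ c → b.1 ≠ σ c.1 := by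
    rintro ⟨b, hb⟩ ⟨c, hc⟩ _ h
    simp only at h
    subst h
    rw [hσ] at hb
    exact lt_asymm hb hc
  suffices h : Nonempty (Γ.racg ≃* (A → Z2) × (B → DI)) by
    obtain ⟨E⟩ := h
    exact ⟨_, _, ⟨E.trans (MulEquiv.prodCongr
      (MulEquiv.arrowCongr (Fintype.equivFin A) (MulEquiv.refl Z2))
      (MulEquiv.arrowCongr (Fintype.equivFin B) (MulEquiv.refl DI)))⟩⟩
  -- the inverse map
  let φA : ∀ a : A, Z2 →* Γ.racg := fun a => zh (of Γ a.1) (of_mul Γ _)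
  let φB : ∀ b : B, DI →* Γ.racg := fun b =>
    Coprod.lift (zh (of Γ b.1) (of_mul Γ _)) (zh (of Γ (σ b.1)) (of_mul Γ _))
  have hφB : ∀ (b : B) (y : Γ.racg), Commute (of Γ b.1) y → Commute (of Γ (σ b.1)) y →
      ∀ x, Commute (φB b x) y := by
    intro b y h1 h2 x
    exact commute_lift (by rwa [zh_gen]) (by rwa [zh_gen]) x
  have hφA : ∀ (a : A) (y : Γ.racg), Commute (of Γ a.1) y → ∀ x, Commute (φA a x) y := by
    intro a y h1 x
    exact commute_zh (by rwa [zh_gen]) x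
  have hcomA : Pairwise fun a a' => ∀ x y, Commute (φA a x) (φA a' y) := by
    intro a a' haa x y
    refine hφA a _ (hφA a' _ ?_ y).symm x
    apply of_comm
    apply hadj
    · exact fun h => haa (Subtype.ext h)
    · rw [a'.2]
      exact fun h => haa (Subtype.ext h)
  have hcomB : Pairwise fun b b' => ∀ x y, Commute (φB b x) (φB b' y) := by
    intro b b' hbb x y
    have hv : b.1 ≠ b'.1 := fun h => hbb (Subtype.ext h)
    have h1 := hBB b b' hbb
    have h2 := hBB b' b hbb.symm
    have h3 : σ b.1 ≠ σ b'.1 := fun h => hv (by rw [← hσ b.1, h, hσ])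
    refine hφB b _ ?_ ?_ x
    · refine (hφB b' _ ?_ ?_ y).symm <;> apply of_comm <;> apply hadj
      · exact hv
      · exact h1
      · exact h1
      · rwa [hσ]
    · refine (hφB b' _ ?_ ?_ y).symm <;> apply of_comm <;> apply hadj
      · exact h2.symm
      · exact h3
      · exact h3
      · rw [hσ]; exact h2.symm
  have hcomAB : ∀ x y, Commute (MonoidHom.noncommPiCoprod φA hcomA x)
      (MonoidHom.noncommPiCoprod φB hcomB y) := by
    intro x y
    refine MonoidHom.commute_noncommPiCoprod _ (fun b z => Commute.symm ?_) y
    refine MonoidHom.commute_noncommPiCoprod _ (fun a t => Commute.symm ?_) x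
    have h1 : a.1 ≠ b.1 := fun h => hB b (by rw [← h]; exact a.2)
    have h2 : a.1 ≠ σ b.1 := fun h => h1 (by rw [← hσ b.1, ← h, a.2])
    refine hφA a _ (hφB b _ ?_ ?_ z).symm t <;> apply of_comm <;> apply hadj
    · exact h1
    · exact h2
    · exact h2
    · rwa [hσ]
  let I : (A → Z2) × (B → DI) →* Γ.racg :=
    MonoidHom.noncommCoprod (MonoidHom.noncommPiCoprod φA hcomA)
      (MonoidHom.noncommPiCoprod φB hcomB) hcomAB
  -- the forward map
  have hlast : ∀ v, σ v ≠ v → ¬ e v < e (σ v) → e (σ v) < e (σ (σ v)) := by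
    intro v h1 h2
    rw [hσ]
    exact lt_of_le_of_ne (not_lt.1 h2) (fun h => h1 (e.injective h))
  let f : V → (A → Z2) × (B → DI) := fun v =>
    if h : σ v = v then (Pi.mulSingle (⟨v, h⟩ : A) gen, 1)
    else if h' : e v < e (σ v) then (1, Pi.mulSingle (⟨v, h'⟩ : B) da)
    else (1, Pi.mulSingle (⟨σ v, hlast v h h'⟩ : B) db)
  have hfA : ∀ a : A, f a.1 = (Pi.mulSingle a gen, 1) := by
    intro a
    simp only [f]
    rw [dif_pos a.2]
  have hfB : ∀ b : B, f b.1 = (1, Pi.mulSingle b da) := by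
    intro b
    simp only [f]
    rw [dif_neg (hB b), dif_pos b.2]
  have hfB' : ∀ b : B, f (σ b.1) = (1, Pi.mulSingle b db) := by
    intro b
    simp only [f]
    rw [dif_neg (by rw [hσ]; exact (hB b).symm), dif_neg (by rw [hσ]; exact lt_asymm b.2)]
    congr 2
    exact Subtype.ext (hσ _)
  have hcases : ∀ v, (∃ a : A, v = a.1) ∨ (∃ b : B, v = b.1) ∨ (∃ b : B, v = σ b.1) := by
    intro v
    by_cases h : σ v = v
    · exact Or.inl ⟨⟨v, h⟩, rfl⟩
    by_cases h' : e v < e (σ v)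
    · exact Or.inr (Or.inl ⟨⟨v, h'⟩, rfl⟩)
    · exact Or.inr (Or.inr ⟨⟨σ v, hlast v h h'⟩, (hσ v).symm⟩)
  have hsing : ∀ (b b' : B) (x y : DI), b ≠ b' →
      Commute (((1 : A → Z2), Pi.mulSingle b x) : (A → Z2) × (B → DI)) (1, Pi.mulSingle b' y) := by
    intro b b' x y h
    exact Commute.prod (Commute.one_left _) (Pi.mulSingle_commute (f := fun _ : B => DI) h x y)
  obtain ⟨F, hF⟩ := exists_lift Γ f
    (by
      intro v
      rcases hcases v with ⟨a, rfl⟩ | ⟨b, rfl⟩ | ⟨b, rfl⟩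
      · rw [hfA, Prod.mk_mul_mk, ← Pi.mulSingle_mul, gen_mul]; simp
      · rw [hfB, Prod.mk_mul_mk, ← Pi.mulSingle_mul, da_mul]; simp
      · rw [hfB', Prod.mk_mul_mk, ← Pi.mulSingle_mul, db_mul]; simp)
    (by
      intro v w hvw
      rcases hcases v with ⟨a, rfl⟩ | ⟨b, rfl⟩ | ⟨b, rfl⟩ <;>
        rcases hcases w with ⟨a', rfl⟩ | ⟨b', rfl⟩ | ⟨b', rfl⟩ <;>
        simp only [hfA, hfB, hfB']
      · exact Commute.prod (Commute.all _ _) (Commute.one_left _)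
      · exact Commute.prod (Commute.one_right _) (Commute.one_left _)
      · exact Commute.prod (Commute.one_right _) (Commute.one_left _)
      · exact Commute.prod (Commute.one_left _) (Commute.one_right _)
      · exact hsing _ _ _ _ (fun h => hvw.ne (by rw [h]))
      · exact hsing _ _ _ _ (fun h => hnadj b.1 (by rw [← h] at hvw; exact hvw))
      · exact Commute.prod (Commute.one_left _) (Commute.one_right _)
      · exact hsing _ _ _ _ (fun h => hnadj b.1 (by rw [← h] at hvw; exact hvw.symm))
      · exact hsing _ _ _ _ (fun h => hvw.ne (by rw [h])))
  have hIA : ∀ (a : A) x, I (Pi.mulSingle a x, 1) = φA a x := by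
    intro a x
    simp [I]
  have hIB : ∀ (b : B) x, I (1, Pi.mulSingle b x) = φB b x := by
    intro b x
    simp [I]
  refine ⟨MonoidHom.toMulEquiv F I ?_ ?_⟩
  · apply racg_hom_ext
    intro v
    rw [MonoidHom.comp_apply, hF, MonoidHom.id_apply]
    rcases hcases v with ⟨a, rfl⟩ | ⟨b, rfl⟩ | ⟨b, rfl⟩
    · rw [hfA, hIA]; exact zh_gen _ _
    · rw [hfB, hIB]; exact zh_gen (of Γ b.1) (of_mul Γ _)
    · rw [hfB', hIB]; exact zh_gen (of Γ (σ b.1)) (of_mul Γ _)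
  · have hFA : ∀ (a : A), F.comp (φA a) =
        (MonoidHom.inl (A → Z2) (B → DI)).comp (MonoidHom.mulSingle (fun _ => Z2) a) := by
      intro a
      apply z2_hom_ext
      rw [MonoidHom.comp_apply, zh_gen, hF, hfA]
      rfl
    have hFB : ∀ (b : B), F.comp (φB b) =
        (MonoidHom.inr (A → Z2) (B → DI)).comp (MonoidHom.mulSingle (fun _ => DI) b) := by
      intro b
      apply Coprod.hom_ext
      · apply z2_hom_ext
        simp only [MonoidHom.comp_apply, φB, Coprod.lift_apply_inl]
        rw [zh_gen, hF, hfB]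
        rfl
      · apply z2_hom_ext
        simp only [MonoidHom.comp_apply, φB, Coprod.lift_apply_inr]
        rw [zh_gen, hF, hfB']
        rfl
    have h1 : (F.comp I).comp (MonoidHom.inl _ _) = MonoidHom.inl _ _ := by
      apply MonoidHom.pi_ext
      intro a x
      have := DFunLike.congr_fun (hFA a) x
      simp only [MonoidHom.comp_apply, MonoidHom.inl_apply] at this ⊢
      rw [hIA, this]
      rfl
    have h2 : (F.comp I).comp (MonoidHom.inr _ _) = MonoidHom.inr _ _ := by
      apply MonoidHom.pi_ext
      intro a x
      have := DFunLike.congr_fun (hFB a) x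
      simp only [MonoidHom.comp_apply, MonoidHom.inr_apply] at this ⊢
      rw [hIB, this]
      rfl
    ext1 p
    have : p = MonoidHom.inl _ _ p.1 * MonoidHom.inr _ _ p.2 := by simp
    rw [this, map_mul, map_mul]
    exact congrArg₂ (· * ·) (DFunLike.congr_fun h1 p.1) (DFunLike.congr_fun h2 p.2)

end RacgSlender

open RacgSlender in
/-- An infinite finitely generated right-angled Coxeter group `G = C(Γ)` is
slender if and only if `G ≅ (ℤ/2)ⁿ × (ℤ/2 ∗ ℤ/2)ᵏ` for some natural numbers `n` and `k`. -/
theorem racg_slender_iff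
    {V : Type} [Fintype V] [DecidableEq V] (Γ : SimpleGraph V) [DecidableRel Γ.Adj]
    (hinf : Infinite Γ.racg) :
    Group.Slender Γ.racg ↔
      ∃ n k : ℕ, Nonempty (Γ.racg ≃*
        (Fin n → Multiplicative (ZMod 2)) ×
        (Fin k → Monoid.Coprod (Multiplicative (ZMod 2)) (Multiplicative (ZMod 2)))) := by
  constructor
  · intro hs
    have hd := deg_le_one Γ hs
    classical
    let σ : V → V := fun v => if h : ∃ w, w ≠ v ∧ ¬ Γ.Adj v w then h.choose else v
    have hσ1 : ∀ v w, w ≠ v → ¬ Γ.Adj v w → σ v = w := by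
      intro v w h1 h2
      have h : ∃ w, w ≠ v ∧ ¬ Γ.Adj v w := ⟨w, h1, h2⟩
      have : σ v = h.choose := dif_pos h
      rw [this]
      exact hd v _ _ h.choose_spec.1 h1 h.choose_spec.2 h2
    have hσ2 : ∀ v, ¬ Γ.Adj v (σ v) := by
      intro v
      by_cases h : ∃ w, w ≠ v ∧ ¬ Γ.Adj v w
      · have : σ v = h.choose := dif_pos h
        rw [this]
        exact h.choose_spec.2
      · have : σ v = v := dif_neg h
        rw [this]
        exact Γ.loopless.irrefl v
    refine decomp Γ σ ?_ ?_ hσ2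
    · intro v
      by_cases h : σ v = v
      · rw [h, h]
      · exact hσ1 _ _ (Ne.symm h) (fun h' => hσ2 v h'.symm)
    · intro v w h1 h2
      by_contra h3
      exact h2 (hσ1 v w h1 h3).symm
  · rintro ⟨n, k, ⟨E⟩⟩
    exact slender_of_injective E.toMonoidHom E.injective
      (slender_prod (slender_finite _) (slender_pi slender_di k))
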